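/- Let d ≥ 2, let u : ℤ^d → [0,∞) be admissible, and let F : [0,∞)×[0,∞) → [0,∞) be such that −F is supermodular, F(0,0) = 0, and Σ_{x∈ℤ^d} F(|x|, 0) < ∞, where |x| denotes the Euclidean norm of x. Then Σ_{x∈ℤ^d} F(|x|, u(x)) ≤ Σ_{x∈ℤ^d} F(|x|, u*(x)), where the sums are taken in [0,∞] and u* = R_{ℤ^d} u. -/

import Mathlib

open Filter Topology

noncomputable section

abbrev ZLat (d : ℕ) := Fin d → ℤ

def stdVec (d : ℕ) (i : Fin d) : Fin d → ℝ := fun j => if j = i then 1 else 0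

/-- The set of directions E⃗ ⊆ ℝ^d. -/
def Evec (d : ℕ) : Set (Fin d → ℝ) :=
  {e | (∃ i, e = stdVec d i) ∨
    (∃ i j : Fin d, i < j ∧ e = fun k => (stdVec d i k + stdVec d j k) / 2) ∨
    (∃ i j : Fin d, i < j ∧ e = fun k => (stdVec d i k - stdVec d j k) / 2)}

/-- A fixed enumeration of E⃗ (for d = 2 it is e₁, e₂, (e₁+e₂)/2, (e₁-e₂)/2). -/
def EvecList (d : ℕ) : List (Fin d → ℝ) :=
  ((List.finRange d).map (stdVec d)) ++
  ((List.finRange d).flatMap fun i => (List.finRange d).filterMap fun j =>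
    if i < j then some (fun k => (stdVec d i k + stdVec d j k) / 2) else none) ++
  ((List.finRange d).flatMap fun i => (List.finRange d).filterMap fun j =>
    if i < j then some (fun k => (stdVec d i k - stdVec d j k) / 2) else none)

/-- The n-th largest value of `u`, counted with multiplicity (1-indexed). -/
def nthLargest {α : Type*} (u : α → NNReal) (n : ℕ) : NNReal :=
  sSup {t | ∃ Ω : Finset α, Ω.card = n ∧ ∀ x ∈ Ω, t ≤ u x}

/-- The 1-indexed position of the point with doubled coordinate `m` in the
spiral order 0, 1, −1, 2, −2, … (for even m) resp. 1/2, −1/2, 3/2, −3/2, … (for odd m). -/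
def posIdx (m : ℤ) : ℕ := (if 0 < m then m else 1 - m).toNat

/-- `x` and `y` lie on a common line with direction `e`. -/
def sameLine {d : ℕ} (e : Fin d → ℝ) (x y : ZLat d) : Prop :=
  ∃ c : ℝ, (fun i => (x i : ℝ) - (y i : ℝ)) = c • e

/-- Twice the inner product ⟨e, x⟩, as an integer. -/
def pairing {d : ℕ} (e : Fin d → ℝ) (x : ZLat d) : ℤ :=
  ⌊2 * ∑ i, e i * (x i : ℝ)⌋

/-- One-step rearrangement `R_e`. -/
def stepR {d : ℕ} (e : Fin d → ℝ) (u : ZLat d → NNReal) : ZLat d → NNReal :=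
  fun x => nthLargest (fun y : {y : ZLat d // sameLine e x y} => u y.1) (posIdx (pairing e x))

/-- `R^k u` : k successive one-step rearrangements cycling through the fixed enumeration. -/
def iterR (d : ℕ) (u : ZLat d → NNReal) : ℕ → ZLat d → NNReal
  | 0 => u
  | k + 1 => stepR ((EvecList d).getD (k % (EvecList d).length) 0) (iterR d u k)

/-- The Schwarz rearrangement on ℤ^d : pointwise limit of `R^k u`. -/
def RZd (d : ℕ) (u : ZLat d → NNReal) : ZLat d → NNReal :=
  fun x => limUnder atTop fun k => iterR d u k x

def Admissible {α : Type*} (u : α → NNReal) : Prop :=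
  ∀ t : NNReal, 0 < t → {x | t < u x}.Finite

def Equimeasurable {α : Type*} (u v : α → NNReal) : Prop :=
  ∀ t : NNReal, 0 < t → Nonempty ({x | t < u x} ≃ {x | t < v x})

/-- Graph distance (ℓ¹ distance) on the lattice ℤ^d. -/
def latDist {d : ℕ} (x y : ZLat d) : ℕ := ∑ i, (x i - y i).natAbs

/-- The i-th standard basis vector of ℤ^d. -/
def latE {d : ℕ} (i : Fin d) : ZLat d := fun j => if j = i then 1 else 0

/-- ‖∇u‖_p^p : the p-Sobolev energy, summing over each edge {x, x+e_i} once. -/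
def gradEnergy (d : ℕ) (p : ℝ) (u : ZLat d → NNReal) : ENNReal :=
  ∑' (x : ZLat d) (i : Fin d), ENNReal.ofReal (|(u (x + latE i) : ℝ) - (u x : ℝ)| ^ p)

/-- ‖∇u‖_p. -/
def gradNorm (d : ℕ) (p : ℝ) (u : ZLat d → NNReal) : ENNReal :=
  gradEnergy d p u ^ (1 / p)

/-- Graph automorphism of the lattice graph ℤ^d. -/
def IsLatAuto {d : ℕ} (σ : ZLat d ≃ ZLat d) : Prop :=
  ∀ x y : ZLat d, latDist (σ x) (σ y) = 1 ↔ latDist x y = 1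

def Supermodular (G : NNReal → NNReal → NNReal) : Prop :=
  ∀ s t s₀ t₀ : NNReal, G (s + s₀) t + G s (t + t₀) ≤ G (s + s₀) (t + t₀) + G s t

def StrictlySupermodular (G : NNReal → NNReal → NNReal) : Prop :=
  ∀ s t s₀ t₀ : NNReal, 0 < s₀ → 0 < t₀ →
    G (s + s₀) t + G s (t + t₀) < G (s + s₀) (t + t₀) + G s t

/-- The values of `u` are strictly decreasing: a₁ > a₂ > a₃ > ⋯ . -/
def StrictRan {α : Type*} (u : α → NNReal) : Prop :=
  ∀ n : ℕ, 0 < n → nthLargest u (n + 1) < nthLargest u n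


/-- The Euclidean norm |x| of a lattice point. -/
def eucNorm {d : ℕ} (x : ZLat d) : NNReal :=
  Real.toNNReal (Real.sqrt (∑ i, ((x i : ℝ)) ^ 2))

/-!
A one-step rearrangement acts on every superlevel set separately, replacing its points on each line
by the same number of points of lowest rank in the spiral order. The spiral order refines the order
by distance from the origin, so this moves a superlevel set by a bijection that brings no point
farther from the origin. On each line it even is the strict order by distance from the point
`(d, d - 1, …, 1) / (2d + 2)` slightly off the origin, whatever the direction. Hence the sum of the
(suitably scaled, natural) squared distances from that point drops unless the set stays fixed,
and the iterates of a finite set are eventually constant. Therefore `R^k u` converges, and each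
superlevel set `{u > t}` with `t > 0` has a bijection onto `{u* > t}` that does not increase `|x|`.

If `-F` is supermodular, then `s ↦ F(s, t') - F(s, t)` is antitone for `t ≤ t'`, and decomposing
`F(|x|, u(x)) - F(|x|, 0)` over the values of `u` sums these bijections to the inequality. Splitting
off `F(|x|, 0)` requires `F(s, 0) ≤ F(s, t)`: otherwise submodularity would bound `F(|x|, 0)` away
from `0` for all `|x| ≥ s`, and its sum would diverge.
-/

/-! ### Level sets of the decreasing rearrangement -/

theorem lt_nthLargest_iff {α : Type*} {u : α → NNReal} (hu : BddAbove (Set.range u)) {n : ℕ}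
    (hn : n ≠ 0) {t : NNReal} : t < nthLargest u n ↔ (n : ℕ∞) ≤ {x | t < u x}.encard := by
  have hle_iff : (n : ℕ∞) ≤ {x | t < u x}.encard ↔
      ∃ Ω : Finset α, Ω.card = n ∧ ∀ x ∈ Ω, t < u x := by
    refine ⟨fun h ↦ ?_, fun ⟨Ω, hcard, hΩ⟩ ↦ ?_⟩
    · obtain ⟨Ω, hΩ, hcard⟩ := Set.exists_subset_encard_eq h
      lift Ω to Finset α using Set.finite_of_encard_eq_coe hcard
      exact ⟨Ω, by simpa using hcard, hΩ⟩
    · rw [← hcard, ← Set.encard_coe_eq_coe_finsetCard]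
      exact Set.encard_le_encard hΩ
  rw [hle_iff]
  constructor
  · intro h
    obtain ⟨s, ⟨Ω, hcard, hs⟩, hts⟩ := exists_lt_of_lt_csSup' h
    exact ⟨Ω, hcard, fun x hx ↦ hts.trans_le (hs x hx)⟩
  · rintro ⟨Ω, hcard, hΩ⟩
    have hne {Ω : Finset α} (h : Ω.card = n) : Ω.Nonempty := by
      rw [← Finset.card_ne_zero, h]; exact hn
    obtain ⟨z, hz, hmin⟩ := Ω.exists_min_image u (hne hcard)
    obtain ⟨M, hM⟩ := hu
    refine (hΩ z hz).trans_le (le_csSup ⟨M, ?_⟩ ⟨Ω, hcard, hmin⟩)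
    rintro s ⟨Ω', hcard', hs⟩
    obtain ⟨x, hx⟩ := hne hcard'
    exact (hs x hx).trans (hM ⟨x, rfl⟩)

theorem Admissible.bddAbove_range {α : Type*} {u : α → NNReal} (hu : Admissible u) :
    BddAbove (Set.range u) := by
  obtain ⟨M, hM⟩ := ((hu 1 one_pos).image u).bddAbove
  refine ⟨max 1 M, Set.forall_mem_range.2 fun x ↦ ?_⟩
  rcases lt_or_ge 1 (u x) with h | h
  · exact le_max_of_le_right (hM ⟨x, h, rfl⟩)
  · exact le_max_of_le_left h

theorem Admissible.exists_gt_setOf_lt_eq {α : Type*} {u : α → NNReal} (hu : Admissible u)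
    {t : NNReal} (ht : 0 < t) : ∃ t' > t, {x | t' < u x} = {x | t < u x} := by
  rcases {x | t < u x}.eq_empty_or_nonempty with hempty | hne
  · refine ⟨t + 1, by simp, ?_⟩
    rw [hempty, ← Set.subset_empty_iff, ← hempty]
    exact fun x (hx : t + 1 < u x) ↦ le_self_add.trans_lt hx
  · obtain ⟨z, hz, hmin⟩ := Set.exists_min_image _ u (hu t ht) hne
    obtain ⟨t', htt', ht'z⟩ := exists_between (Set.mem_ofPred.1 hz)
    exact ⟨t', htt', Set.Subset.antisymm (fun x hx ↦ htt'.trans hx)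
      fun x hx ↦ ht'z.trans_le (hmin x hx)⟩

/-! ### Contractions between level sets -/

section Contraction

variable {α β : Type*} [Preorder β] {N : α → β} {A B C : Set α}

/-- `ContractsTo N A B`: some bijection from `A` onto `B` does not increase the size `N` of any
point. This is the order in which rearrangement moves level sets towards the origin. -/
def ContractsTo (N : α → β) (A B : Set α) : Prop :=
  ∃ f : α → α, Set.BijOn f A B ∧ ∀ x ∈ A, N (f x) ≤ N x

theorem ContractsTo.refl (N : α → β) (A : Set α) : ContractsTo N A A :=
  ⟨id, Set.bijOn_id A, fun _ _ ↦ le_rfl⟩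

theorem ContractsTo.trans (hAB : ContractsTo N A B) (hBC : ContractsTo N B C) :
    ContractsTo N A C := by
  obtain ⟨f, hf, hfN⟩ := hAB
  obtain ⟨g, hg, hgN⟩ := hBC
  exact ⟨g ∘ f, hg.comp hf, fun x hx ↦ (hgN _ (hf.mapsTo hx)).trans (hfN x hx)⟩

theorem ContractsTo.finite (h : ContractsTo N A B) (hA : A.Finite) : B.Finite := by
  obtain ⟨f, hf, -⟩ := h
  exact hf.finite_iff_finite.1 hA

theorem ContractsTo.sum_le_sum {M : Type*} [AddCommMonoid M] [PartialOrder M]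
    [IsOrderedAddMonoid M] {A B : Finset α} (h : ContractsTo N (A : Set α) B) {D : β → M}
    (hD : Antitone D) : ∑ x ∈ A, D (N x) ≤ ∑ x ∈ B, D (N x) := by
  obtain ⟨f, hf, hfN⟩ := h
  calc ∑ x ∈ A, D (N x) ≤ ∑ x ∈ A, D (N (f x)) := Finset.sum_le_sum fun x hx ↦ hD (hfN x hx)
    _ = ∑ x ∈ B, D (N x) :=
      Finset.sum_nbij f hf.mapsTo hf.injOn hf.surjOn fun _ _ ↦ rfl

end Contraction

/-! ### Submodular sums -/

section Submodular

variable {α β γ M : Type*}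

/-- `IsSubmodular F`: the function `-F` is supermodular. -/
def IsSubmodular [Preorder β] [Preorder γ] [Add M] [LE M] (F : β → γ → M) : Prop :=
  ∀ ⦃s s'⦄, s ≤ s' → ∀ ⦃t t'⦄, t ≤ t' → F s' t' + F s t ≤ F s' t + F s t'

theorem isSubmodular_of_forall_add [Preorder β] [Add β] [ExistsAddOfLE β] [Preorder γ] [Add γ]
    [ExistsAddOfLE γ] [Add M] [LE M] {F : β → γ → M}
    (hF : ∀ s t s₀ t₀, F (s + s₀) (t + t₀) + F s t ≤ F (s + s₀) t + F s (t + t₀)) :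
    IsSubmodular F := fun s s' hs t t' ht ↦ by
  obtain ⟨s₀, rfl⟩ := exists_add_of_le hs
  obtain ⟨t₀, rfl⟩ := exists_add_of_le ht
  exact hF s t s₀ t₀

theorem IsSubmodular.antitone_sub [Preorder β] [Preorder γ] [AddCommGroup M] [PartialOrder M]
    [IsOrderedAddMonoid M] {F : β → γ → M} (hF : IsSubmodular F) {t t' : γ} (ht : t ≤ t') :
    Antitone fun s ↦ F s t' - F s t := fun s s' hs ↦ by
  rw [sub_le_sub_iff, add_comm (F s t')]
  exact hF hs ht

theorem sum_filter_lt_sub_eq_add [LinearOrder γ] [AddCommGroup M] {G : α → γ → M}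
    {S : Finset α} {v : α → γ} {t a : γ} (hta : t < a)
    (hv : ∀ x ∈ S, t < v x → a ≤ v x) :
    ∑ x ∈ S with t < v x, (G x (v x) - G x t) =
      ∑ x ∈ S with a < v x, (G x (v x) - G x a) + ∑ x ∈ S with t < v x, (G x a - G x t) := by
  have hsub : {x ∈ S | a < v x} ⊆ {x ∈ S | t < v x} :=
    Finset.monotone_filter_right S fun x _ ↦ hta.trans
  rw [Finset.sum_subset hsub, ← Finset.sum_add_distrib]
  · simp only [sub_add_sub_cancel]
  · intro x hx hxa
    simp only [Finset.mem_filter] at hx hxa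
    have : v x = a := ((hv x hx.1 hx.2).eq_of_not_lt fun h ↦ hxa ⟨hx.1, h⟩).symm
    rw [this, sub_self]

variable [Preorder β] [LinearOrder γ] [AddCommGroup M] [PartialOrder M] [IsOrderedAddMonoid M]
  {N : α → β} {F : β → γ → M}

/- Layer-cake decomposition over the finite set `T` of values of `u` and `w` above `t`: raising the
base level from `t` to the least value `a > t` splits off `F(s, a) - F(s, t)` on the level sets. -/
theorem IsSubmodular.sum_sub_le_sum_sub (hF : IsSubmodular F) {S : Finset α} {u w : α → γ}
    (T : Finset γ) : ∀ t : γ,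
    (∀ a ≥ t, ContractsTo N {x ∈ S | a < u x} {x ∈ S | a < w x}) →
    (∀ x ∈ S, t < u x → u x ∈ T) → (∀ x ∈ S, t < w x → w x ∈ T) →
    ∑ x ∈ S with t < u x, (F (N x) (u x) - F (N x) t) ≤
      ∑ x ∈ S with t < w x, (F (N x) (w x) - F (N x) t) := by
  induction T using Finset.induction_on_min with
  | empty =>
    intro t _ hu hw
    rw [Finset.filter_false_of_mem fun x hx h ↦ Finset.notMem_empty _ (hu x hx h),
      Finset.filter_false_of_mem fun x hx h ↦ Finset.notMem_empty _ (hw x hx h)]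
    rfl
  | insert a T haT ih =>
    intro t hcontr hu hw
    have mem_T {v : α → γ} {b : γ} (hab : a ≤ b) (htb : t ≤ b)
        (hv : ∀ x ∈ S, t < v x → v x ∈ insert a T) : ∀ x ∈ S, b < v x → v x ∈ T :=
      fun x hx h ↦ Finset.mem_of_mem_insert_of_ne (hv x hx (htb.trans_lt h)) (hab.trans_lt h).ne'
    have le_of_lt {v : α → γ} (hv : ∀ x ∈ S, t < v x → v x ∈ insert a T) :
        ∀ x ∈ S, t < v x → a ≤ v x := fun x hx h ↦
      (Finset.mem_insert.1 (hv x hx h)).elim ge_of_eq fun hT ↦ (haT _ hT).le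
    rcases le_or_gt a t with hat | hta
    · exact ih t hcontr (mem_T hat le_rfl hu) (mem_T hat le_rfl hw)
    rw [sum_filter_lt_sub_eq_add (G := fun x ↦ F (N x)) hta (le_of_lt hu),
      sum_filter_lt_sub_eq_add (G := fun x ↦ F (N x)) hta (le_of_lt hw)]
    have hcontr_t : ContractsTo N ({x ∈ S | t < u x} : Finset α)
        ({x ∈ S | t < w x} : Finset α) := by
      simpa using hcontr t le_rfl
    exact add_le_add
      (ih a (fun b hb ↦ hcontr b (hta.le.trans hb)) (mem_T le_rfl hta.le hu)
        (mem_T le_rfl hta.le hw))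
      (hcontr_t.sum_le_sum (hF.antitone_sub hta.le))

theorem IsSubmodular.sum_le_sum (hF : IsSubmodular F) {S : Finset α} {u w : α → γ} {t : γ}
    (hcontr : ∀ a ≥ t, ContractsTo N {x ∈ S | a < u x} {x ∈ S | a < w x})
    (hFt : Antitone fun s ↦ F s t) :
    ∑ x ∈ S with t < u x, F (N x) (u x) ≤ ∑ x ∈ S with t < w x, F (N x) (w x) := by
  have hcontr_t : ContractsTo N ({x ∈ S | t < u x} : Finset α)
      ({x ∈ S | t < w x} : Finset α) := by
    simpa using hcontr t le_rfl
  have h := add_le_add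
    (hF.sum_sub_le_sum_sub (S.image u ∪ S.image w) t hcontr
      (fun x hx _ ↦ Finset.mem_union_left _ (Finset.mem_image_of_mem u hx))
      (fun x hx _ ↦ Finset.mem_union_right _ (Finset.mem_image_of_mem w hx)))
    (hcontr_t.sum_le_sum hFt)
  simpa only [← Finset.sum_add_distrib, sub_add_cancel] using h

end Submodular

section LevelSetComparison

variable {α β : Type*} [Preorder β] {N : α → β} {u w : α → NNReal}

theorem sum_filter_le_sum_filter_of_contractsTo {G : β → NNReal → NNReal} (hG : IsSubmodular G)
    (hG0 : ∀ s, G s 0 = 0)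
    (hcontr : ∀ t > 0, ContractsTo N {x | t < u x} {x | t < w x}) {S : Finset α} {t : NNReal}
    (ht : 0 < t) (huS : {x | t < u x} ⊆ S) (hwS : {x | t < w x} ⊆ S) :
    ∑ x ∈ S with t < u x, G (N x) (u x) ≤ ∑ x ∈ S with t < w x, G (N x) (w x) := by
  have hGreal : IsSubmodular fun s t ↦ (G s t : ℝ) := fun s s' hs t t' ht ↦ by
    exact_mod_cast hG hs ht
  have hanti : Antitone fun s ↦ (G s t : ℝ) := by
    simpa [hG0] using hGreal.antitone_sub (zero_le (a := t))
  have hS {v : α → NNReal} (hv : {x | t < v x} ⊆ S) {a : NNReal} (ha : t ≤ a) :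
      {x | x ∈ S ∧ a < v x} = {x | a < v x} :=
    Set.ext fun x ↦ and_iff_right_of_imp fun h ↦ hv (ha.trans_lt h)
  have h := hGreal.sum_le_sum (N := N) (S := S) (u := u) (w := w) (t := t)
    (fun a ha ↦ by rw [hS huS ha, hS hwS ha]; exact hcontr a (ht.trans_le ha)) hanti
  exact_mod_cast h

theorem tsum_le_tsum_of_contractsTo_of_zero {G : β → NNReal → NNReal} (hG : IsSubmodular G)
    (hG0 : ∀ s, G s 0 = 0) (hu : Admissible u)
    (hcontr : ∀ t > 0, ContractsTo N {x | t < u x} {x | t < w x}) :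
    ∑' x, (G (N x) (u x) : ENNReal) ≤ ∑' x, (G (N x) (w x) : ENNReal) := by
  classical
  rw [ENNReal.tsum_eq_iSup_sum]
  refine iSup_le fun S ↦ ?_
  obtain ⟨t, ht, htS⟩ : ∃ t > 0, ∀ x ∈ S, 0 < u x → t < u x := by
    have h : ∀ᶠ t in 𝓝[>] (0 : NNReal), ∀ x ∈ S, 0 < u x → t < u x :=
      (Finset.eventually_all S).2 fun x _ ↦ by
        by_cases hx : 0 < u x
        · filter_upwards [nhdsWithin_le_nhds (eventually_lt_nhds hx)] with t ht _ using ht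
        · exact Eventually.of_forall fun t h ↦ absurd h hx
    obtain ⟨t, ht, ht0⟩ := (h.and self_mem_nhdsWithin).exists
    exact ⟨t, ht0, ht⟩
  have hfin := hu t ht
  set S' := S ∪ hfin.toFinset ∪ ((hcontr t ht).finite hfin).toFinset
  have huS : {x | t < u x} ⊆ S' := fun x hx ↦ by simp_all [S']
  have hwS : {x | t < w x} ⊆ S' := fun x hx ↦ by simp_all [S']
  have hS_sub : {x ∈ S | t < u x} ⊆ {x ∈ S' | t < u x} :=
    Finset.filter_subset_filter _ fun x hx ↦ by simp [S', hx]
  calc ∑ x ∈ S, (G (N x) (u x) : ENNReal)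
      = ∑ x ∈ S with t < u x, (G (N x) (u x) : ENNReal) := by
        refine (Finset.sum_filter_of_ne fun x hx hne ↦ htS x hx (pos_iff_ne_zero.2 ?_)).symm
        rintro h
        simp [h, hG0] at hne
    _ ≤ ∑ x ∈ S' with t < u x, (G (N x) (u x) : ENNReal) := Finset.sum_le_sum_of_subset hS_sub
    _ ≤ ∑ x ∈ S' with t < w x, (G (N x) (w x) : ENNReal) := by
        exact_mod_cast sum_filter_le_sum_filter_of_contractsTo hG hG0 hcontr ht huS hwS
    _ ≤ ∑' x, (G (N x) (w x) : ENNReal) := ENNReal.sum_le_tsum _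

theorem tsum_le_tsum_of_contractsTo {F : β → NNReal → NNReal} (hF : IsSubmodular F)
    (hF0 : ∀ s t, F s 0 ≤ F s t) (hu : Admissible u)
    (hcontr : ∀ t > 0, ContractsTo N {x | t < u x} {x | t < w x}) :
    ∑' x, (F (N x) (u x) : ENNReal) ≤ ∑' x, (F (N x) (w x) : ENNReal) := by
  have hG : IsSubmodular fun s t ↦ F s t - F s 0 := fun s s' hs t t' ht ↦ by
    rw [← NNReal.coe_le_coe]
    have h : (F s' t' + F s t : ℝ) ≤ F s' t + F s t' := by exact_mod_cast hF hs ht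
    simp only [NNReal.coe_add, NNReal.coe_sub (hF0 _ _)]
    linarith
  have split (v : α → NNReal) : ∑' x, (F (N x) (v x) : ENNReal) =
      ∑' x, (F (N x) 0 : ENNReal) + ∑' x, ((F (N x) (v x) - F (N x) 0 : NNReal) : ENNReal) := by
    simp only [← ENNReal.tsum_add, ← ENNReal.coe_add, add_tsub_cancel_of_le (hF0 _ _)]
  rw [split u, split w]
  exact add_le_add_right
    (tsum_le_tsum_of_contractsTo_of_zero hG (fun s ↦ tsub_self (F s 0)) hu hcontr) _

end LevelSetComparison

theorem IsSubmodular.apply_zero_le_of_tsum_lt_top {α β : Type*} [LinearOrder β] {N : α → β}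
    {F : β → NNReal → NNReal} (hF : IsSubmodular F) (hN : ∀ s, {x | s ≤ N x}.Infinite)
    (hfin : ∑' x, (F (N x) 0 : ENNReal) < ⊤) (s : β) (t : NNReal) : F s 0 ≤ F s t := by
  by_contra! hlt
  have hdrop {x : α} (hx : s ≤ N x) : F s 0 - F s t ≤ F (N x) 0 := by
    rw [tsub_le_iff_right]
    exact le_add_self.trans (hF hx zero_le)
  have hpos : ((F s 0 - F s t : NNReal) : ENNReal) ≠ 0 := by
    exact_mod_cast (tsub_pos_of_lt hlt).ne'
  exact hN s ((ENNReal.finite_const_le_of_tsum_ne_top hfin.ne hpos).subset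
    fun x hx ↦ ENNReal.coe_le_coe.2 (hdrop hx))

/-! ### Compression of sets along lines -/

section Compression

variable {α ι : Type*} (φ : α ≃ ι × ℕ) (A : Set α)

/-- The points of `A` on line `i`, recorded by their ranks. Throughout, an equivalence
`φ : α ≃ ι × ℕ` encodes a partition of `α` into lines indexed by `ι`, together with an enumeration
of each line by `ℕ`: the point `x` has rank `(φ x).2` on the line `(φ x).1`. -/
def lineRanks (i : ι) : Set ℕ := {n | φ.symm (i, n) ∈ A}

/-- The rearrangement of the set `A` along the lines of `φ`: on each line, as many points as
`A` has there, of the lowest ranks possible. -/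
def compress : Set α := {x | ((φ x).2 : ℕ∞) < (lineRanks φ A (φ x).1).encard}

open Classical in
/-- The bijection from `A` onto `compress φ A` preserving lines and the order of ranks. -/
def slide (x : α) : α :=
  φ.symm ((φ x).1, Nat.count (· ∈ lineRanks φ A (φ x).1) (φ x).2)

variable {φ A}

theorem snd_mem_lineRanks {x : α} : (φ x).2 ∈ lineRanks φ A (φ x).1 ↔ x ∈ A := by
  simp [lineRanks]

theorem encard_lineRanks (i : ι) :
    (lineRanks φ A i).encard = {y | (φ y).1 = i ∧ y ∈ A}.encard := by
  rw [← Function.Injective.encard_image (f := fun n ↦ φ.symm (i, n))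
    (φ.symm.injective.comp (Prod.mk_right_injective i))]
  congr 1
  ext y
  constructor
  · rintro ⟨n, hn, rfl⟩
    exact ⟨by simp, hn⟩
  · rintro ⟨rfl, hy⟩
    exact ⟨(φ y).2, snd_mem_lineRanks.2 hy, by simp⟩

theorem natCast_lt_encard_iff {s : Set α} {n : ℕ} :
    (n : ℕ∞) < s.encard ↔ ∀ hs : s.Finite, n < hs.toFinset.card := by
  by_cases hs : s.Finite
  · simp [hs, hs.encard_eq_coe_toFinset_card]
  · simp [hs, Set.encard_eq_top hs]

open Classical in
theorem bijOn_slide : Set.BijOn (slide φ A) A (compress φ A) := by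
  refine ⟨fun x hx ↦ ?_, fun x hx y hy hxy ↦ ?_, fun y hy ↦ ?_⟩
  · simp only [compress, slide, Set.mem_ofPred_eq, Equiv.apply_symm_apply, natCast_lt_encard_iff]
    exact fun hs ↦ Nat.count_lt_card hs (snd_mem_lineRanks.2 hx)
  · obtain ⟨hline, hcount⟩ := Prod.ext_iff.1 (φ.symm.injective hxy)
    have hx' : (φ x).2 ∈ lineRanks φ A (φ x).1 := snd_mem_lineRanks.2 hx
    simp only at hline hcount
    rw [hline] at hcount hx'
    exact φ.injective (Prod.ext hline
      (Nat.count_injective hx' (snd_mem_lineRanks.2 hy) hcount))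
  · have hcard := natCast_lt_encard_iff.1 hy
    refine ⟨φ.symm ((φ y).1, Nat.nth (· ∈ lineRanks φ A (φ y).1) (φ y).2), ?_, ?_⟩
    · exact Nat.nth_mem _ hcard
    · simp only [slide, Equiv.apply_symm_apply]
      rw [Equiv.symm_apply_eq]
      exact Prod.ext rfl (Nat.count_nth hcard)

theorem compress_empty : compress φ (∅ : Set α) = ∅ := by
  simp [compress, lineRanks]

theorem finite_compress (hA : A.Finite) : (compress φ A).Finite :=
  bijOn_slide.finite_iff_finite.1 hA

open Classical in
theorem slide_eq_or_rank_lt (x : α) : slide φ A x = x ∨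
    ∃ n < (φ x).2, slide φ A x = φ.symm ((φ x).1, n) := by
  rcases (Nat.count_le (p := (· ∈ lineRanks φ A (φ x).1)) (n := (φ x).2)).eq_or_lt with h | h
  · left; simp [slide, h]
  · exact Or.inr ⟨_, h, rfl⟩

theorem contractsTo_compress {β : Type*} [Preorder β] {N : α → β}
    (hN : ∀ i, Monotone fun n ↦ N (φ.symm (i, n))) : ContractsTo N A (compress φ A) := by
  refine ⟨slide φ A, bijOn_slide, fun x _ ↦ ?_⟩
  rcases slide_eq_or_rank_lt (φ := φ) (A := A) x with h | ⟨n, hn, h⟩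
  · rw [h]
  · simpa [h] using hN (φ x).1 hn.le

theorem finsum_compress_lt_or_eq {W : α → ℕ} (hW : ∀ i, StrictMono fun n ↦ W (φ.symm (i, n)))
    (hA : A.Finite) : ∑ᶠ x ∈ compress φ A, W x < ∑ᶠ x ∈ A, W x ∨ compress φ A = A := by
  have hlt {x : α} (hx : slide φ A x ≠ x) : W (slide φ A x) < W x := by
    obtain ⟨n, hn, h⟩ := (slide_eq_or_rank_lt x).resolve_left hx
    simpa [h] using hW (φ x).1 hn
  have hle (x : α) : W (slide φ A x) ≤ W x := by
    rcases eq_or_ne (slide φ A x) x with h | h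
    exacts [h.symm ▸ le_rfl, (hlt h).le]
  by_cases hfix : ∀ x ∈ A, slide φ A x = x
  · right
    rw [← bijOn_slide.image_eq, Set.image_congr hfix, Set.image_id']
  · left
    push Not at hfix
    obtain ⟨x, hxA, hx⟩ := hfix
    rw [← finsum_mem_eq_of_bijOn (f := fun x ↦ W (slide φ A x)) _ bijOn_slide fun _ _ ↦ rfl,
      finsum_mem_eq_finite_toFinset_sum _ hA, finsum_mem_eq_finite_toFinset_sum _ hA]
    exact Finset.sum_lt_sum (fun y _ ↦ hle y) ⟨x, by simpa using hxA, hlt hx⟩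

end Compression

/-! ### Iterated compression and its limit -/

theorem exists_forall_ge_eq_of_lt_or_eq {X Y : Type*} [PartialOrder Y] [WellFoundedLT Y] {Φ : X → Y}
    {a : ℕ → X} (h : ∀ k, Φ (a (k + 1)) < Φ (a k) ∨ a (k + 1) = a k) :
    ∃ K, ∀ k ≥ K, a k = a K := by
  have hanti : Antitone (Φ ∘ a) := antitone_nat_of_succ_le fun k ↦
    (h k).elim le_of_lt fun heq ↦ (congrArg Φ heq).le
  obtain ⟨K, hK⟩ := WellFoundedLT.antitone_chain_condition hanti
  refine ⟨K, fun k hk ↦ ?_⟩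
  induction k, hk using Nat.le_induction with
  | base => rfl
  | succ k hk ih =>
    refine ((h k).resolve_left fun hlt ↦ hlt.ne ?_).trans ih
    exact (hK (k + 1) (hk.trans k.le_succ)).symm.trans (hK k hk)

section CompressIter

variable {α : Type*} {ι : ℕ → Type*} (φ : ∀ k, α ≃ ι k × ℕ)

/-- Successive compression of the set `A` along the lines of `φ 0`, `φ 1`, …: what `k` one-step
rearrangements do to a level set `A`. -/
def compressIter (A : Set α) : ℕ → Set α
  | 0 => A
  | k + 1 => compress (φ k) (compressIter A k)

variable {φ} {A : Set α}

theorem compressIter_empty (k : ℕ) : compressIter φ ∅ k = ∅ := by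
  induction k with
  | zero => rfl
  | succ k ih => rw [compressIter, ih, compress_empty]

theorem finite_compressIter (hA : A.Finite) (k : ℕ) : (compressIter φ A k).Finite := by
  induction k with
  | zero => exact hA
  | succ k ih => exact finite_compress ih

theorem contractsTo_compressIter {β : Type*} [Preorder β] {N : α → β}
    (hN : ∀ k i, Monotone fun n ↦ N ((φ k).symm (i, n))) (k : ℕ) :
    ContractsTo N A (compressIter φ A k) := by
  induction k with
  | zero => exact .refl N A
  | succ k ih => exact ih.trans (contractsTo_compress (hN k))

theorem exists_forall_ge_compressIter_eq {W : α → ℕ}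
    (hW : ∀ k i, StrictMono fun n ↦ W ((φ k).symm (i, n))) (hA : A.Finite) :
    ∃ K, ∀ k ≥ K, compressIter φ A k = compressIter φ A K :=
  exists_forall_ge_eq_of_lt_or_eq (Φ := fun B ↦ ∑ᶠ x ∈ B, W x)
    fun k ↦ finsum_compress_lt_or_eq (hW k) (finite_compressIter hA k)

variable {v : ℕ → α → NNReal}

theorem setOf_lt_eq_compressIter
    (hv : ∀ k t, {x | t < v (k + 1) x} = compress (φ k) {x | t < v k x}) (t : NNReal) (k : ℕ) :
    {x | t < v k x} = compressIter φ {x | t < v 0 x} k := by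
  induction k with
  | zero => rfl
  | succ k ih => rw [hv, ih, compressIter]

theorem exists_tendsto_of_setOf_lt_eq_compress {W : α → ℕ}
    (hW : ∀ k i, StrictMono fun n ↦ W ((φ k).symm (i, n)))
    (hv : ∀ k t, {x | t < v (k + 1) x} = compress (φ k) {x | t < v k x})
    (h0 : Admissible (v 0)) (x : α) : ∃ c, Tendsto (fun k ↦ v k x) atTop (𝓝 c) := by
  have hlevel := setOf_lt_eq_compressIter hv
  refine tendsto_of_no_upcrossings dense_univ ?_ ?_ (isBoundedUnder_of ⟨0, fun _ ↦ zero_le⟩)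
  · rintro a - b - hab ⟨hbelow, habove⟩
    have ha : 0 < a := hbelow.exists.elim fun k hk ↦ pos_of_gt hk
    obtain ⟨K, hK⟩ := exists_forall_ge_compressIter_eq hW (h0 a ha)
    obtain ⟨k, hk_lt, hk⟩ := (hbelow.and_eventually (eventually_ge_atTop K)).exists
    obtain ⟨l, hl_lt, hl⟩ := (habove.and_eventually (eventually_ge_atTop K)).exists
    have hxl : x ∈ {x | a < v l x} := hab.trans hl_lt
    rw [hlevel, hK l hl, ← hK k hk, ← hlevel] at hxl
    exact hxl.not_gt hk_lt
  · obtain ⟨M, hM⟩ := h0.bddAbove_range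
    have hempty : {x | M < v 0 x} = ∅ :=
      Set.eq_empty_of_forall_notMem fun y hy ↦ (hM ⟨y, rfl⟩).not_gt hy
    refine isBoundedUnder_of ⟨M, fun k ↦ ?_⟩
    have hx : x ∉ {x | M < v k x} := by
      rw [hlevel, hempty, compressIter_empty]; exact Set.notMem_empty x
    exact not_lt.1 hx

theorem exists_setOf_lt_eq_compressIter_of_tendsto {W : α → ℕ}
    (hW : ∀ k i, StrictMono fun n ↦ W ((φ k).symm (i, n)))
    (hv : ∀ k t, {x | t < v (k + 1) x} = compress (φ k) {x | t < v k x})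
    (h0 : Admissible (v 0)) {w : α → NNReal} (hw : ∀ x, Tendsto (fun k ↦ v k x) atTop (𝓝 (w x)))
    {t : NNReal} (ht : 0 < t) : ∃ k, {x | t < w x} = compressIter φ {x | t < v 0 x} k := by
  have hlevel := setOf_lt_eq_compressIter hv
  obtain ⟨K, hK⟩ := exists_forall_ge_compressIter_eq hW (h0 t ht)
  refine ⟨K, Set.ext fun x ↦ ⟨fun hx ↦ ?_, fun hx ↦ ?_⟩⟩
  · obtain ⟨k, hk_lt, hk⟩ :=
      (((hw x).eventually (lt_mem_nhds hx)).and (eventually_ge_atTop K)).exists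
    rw [← hK k hk, ← hlevel]
    exact hk_lt
  · obtain ⟨t', htt', heq⟩ := h0.exists_gt_setOf_lt_eq ht
    refine htt'.trans_le (ge_of_tendsto (hw x) ?_)
    filter_upwards [eventually_ge_atTop K] with k hk
    rw [← hK k hk, ← heq, ← hlevel] at hx
    exact hx.le

end CompressIter

/-! ### Spiral order on a line -/

theorem posIdx_pos (m : ℤ) : 0 < posIdx m := by
  unfold posIdx; split_ifs <;> omega

theorem eq_zero_of_posIdx_add_two_mul_eq {m k : ℤ} (h : posIdx (m + 2 * k) = posIdx m) :
    k = 0 := by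
  unfold posIdx at h; split_ifs at h <;> omega

theorem exists_posIdx_add_two_mul_eq (m : ℤ) {n : ℕ} (hn : 0 < n) :
    ∃ k : ℤ, posIdx (m + 2 * k) = n := by
  unfold posIdx
  rcases Int.emod_two_eq_zero_or_one (n - m) with h | h
  · refine ⟨(n - m) / 2, ?_⟩
    split_ifs <;> omega
  · refine ⟨(1 - n - m) / 2, ?_⟩
    split_ifs <;> omega

theorem pos_or_neg_of_posIdx_lt {m k : ℤ} (h : posIdx m < posIdx (m + 2 * k)) :
    0 < k ∧ 0 < m + k ∨ k < 0 ∧ m + k ≤ 0 := by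
  unfold posIdx at h; split_ifs at h <;> omega

/-! ### Lattice directions -/

section Direction

variable {d : ℕ} {e : Fin d → ℝ} {v x y : ZLat d}

/-- The point `(d, d - 1, …, 1)`, towards which ties between points at equal distance from the
origin are broken. -/
def tilt (d : ℕ) : ZLat d := fun i ↦ d - i

/-- `IsLatticeDirection e v`: the vector `e` is a direction whose lines in the lattice have step
`v`. The last two fields say that the point `tilt d / (2d + 2)` projects strictly between `0` and
`v / 2` on the line through the origin. -/
structure IsLatticeDirection (e : Fin d → ℝ) (v : ZLat d) : Prop where
  apply_eq (i : Fin d) : e i = v i / (v ⬝ᵥ v : ℤ)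
  dotProduct_self : v ⬝ᵥ v = 1 ∨ v ⬝ᵥ v = 2
  exists_eq_one : ∃ i, v i = 1
  tilt_pos : 0 < tilt d ⬝ᵥ v
  tilt_lt : tilt d ⬝ᵥ v < (d + 1) * (v ⬝ᵥ v)

theorem isLatticeDirection_stdVec (i : Fin d) :
    IsLatticeDirection (stdVec d i) (Pi.single i 1) where
  apply_eq j := by simp [stdVec, Pi.single_apply]
  dotProduct_self := by simp
  exists_eq_one := ⟨i, by simp⟩
  tilt_pos := by simp [tilt]
  tilt_lt := by simp [tilt]

theorem isLatticeDirection_add {i j : Fin d} (hij : i < j) :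
    IsLatticeDirection (fun k ↦ (stdVec d i k + stdVec d j k) / 2)
      (Pi.single i 1 + Pi.single j 1) where
  apply_eq l := by simp [stdVec, Pi.single_apply, hij.ne, hij.ne', one_add_one_eq_two]
  dotProduct_self := by simp [hij.ne, hij.ne']
  exists_eq_one := ⟨i, by simp [hij.ne]⟩
  tilt_pos := by simp only [tilt, dotProduct_add, dotProduct_single, mul_one]; omega
  tilt_lt := by
    have hsq : (Pi.single i 1 + Pi.single j 1 : ZLat d) ⬝ᵥ (Pi.single i 1 + Pi.single j 1) = 2 := by
      simp [hij.ne, hij.ne']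
    simp only [hsq, tilt, dotProduct_add, dotProduct_single, mul_one]
    omega

theorem isLatticeDirection_sub {i j : Fin d} (hij : i < j) :
    IsLatticeDirection (fun k ↦ (stdVec d i k - stdVec d j k) / 2)
      (Pi.single i 1 - Pi.single j 1) where
  apply_eq l := by simp [stdVec, Pi.single_apply, hij.ne, hij.ne', one_add_one_eq_two]
  dotProduct_self := by simp [hij.ne, hij.ne']
  exists_eq_one := ⟨i, by simp [hij.ne]⟩
  tilt_pos := by simpa [tilt, dotProduct_sub] using hij
  tilt_lt := by
    have hsq : (Pi.single i 1 - Pi.single j 1 : ZLat d) ⬝ᵥ (Pi.single i 1 - Pi.single j 1) = 2 := by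
      simp [hij.ne, hij.ne']
    simp only [hsq, tilt, dotProduct_sub, dotProduct_single, mul_one]
    omega

theorem exists_isLatticeDirection_of_mem_evecList (he : e ∈ EvecList d) :
    ∃ v, IsLatticeDirection e v := by
  simp only [EvecList, List.mem_append, List.mem_map, List.mem_flatMap, List.mem_filterMap,
    List.mem_finRange, true_and, Option.ite_none_right_eq_some, Option.some.injEq] at he
  rcases he with (⟨i, rfl⟩ | ⟨i, j, hij, rfl⟩) | ⟨i, j, hij, rfl⟩
  exacts [⟨_, isLatticeDirection_stdVec i⟩, ⟨_, isLatticeDirection_add hij⟩,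
    ⟨_, isLatticeDirection_sub hij⟩]

namespace IsLatticeDirection

variable (h : IsLatticeDirection e v)
include h

theorem dotProduct_self_pos : 0 < v ⬝ᵥ v := by
  rcases h.dotProduct_self with h | h <;> omega

theorem sameLine_iff : sameLine e x y ↔ ∃ k : ℤ, y = x + k • v := by
  have hq : ((v ⬝ᵥ v : ℤ) : ℝ) ≠ 0 := by exact_mod_cast h.dotProduct_self_pos.ne'
  obtain ⟨i, hi⟩ := h.exists_eq_one
  constructor
  · rintro ⟨c, hc⟩
    have hcoord (j : Fin d) : (x j - y j : ℝ) = c / (v ⬝ᵥ v : ℤ) * v j := by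
      rw [congrFun hc j, Pi.smul_apply, smul_eq_mul, h.apply_eq, mul_div_assoc', div_mul_eq_mul_div]
    have hc' : c / (v ⬝ᵥ v : ℤ) = ((x i - y i : ℤ) : ℝ) := by
      simpa [hi] using (hcoord i).symm
    refine ⟨-(x i - y i), funext fun j ↦ ?_⟩
    have : x j - y j = (x i - y i) * v j := by
      exact_mod_cast hc' ▸ hcoord j
    simp only [Pi.add_apply, Pi.smul_apply, smul_eq_mul]
    linarith
  · rintro ⟨k, rfl⟩
    refine ⟨-k * (v ⬝ᵥ v : ℤ), funext fun j ↦ ?_⟩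
    simp [h.apply_eq, mul_assoc, mul_div_cancel₀ _ hq]

theorem equivalence_sameLine : Equivalence (sameLine e) where
  refl _ := h.sameLine_iff.2 ⟨0, by simp⟩
  symm hxy := by
    obtain ⟨k, rfl⟩ := h.sameLine_iff.1 hxy
    exact h.sameLine_iff.2 ⟨-k, by simp⟩
  trans hxy hyz := by
    obtain ⟨k, rfl⟩ := h.sameLine_iff.1 hxy
    obtain ⟨l, rfl⟩ := h.sameLine_iff.1 hyz
    exact h.sameLine_iff.2 ⟨k + l, by rw [add_smul, add_assoc]⟩

theorem pairing_mul_dotProduct_self (x : ZLat d) : pairing e x * (v ⬝ᵥ v) = 2 * (v ⬝ᵥ x) := by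
  have hsum : ∑ i, e i * (x i : ℝ) = (v ⬝ᵥ x : ℤ) / (v ⬝ᵥ v : ℤ) := by
    simp only [h.apply_eq, div_mul_eq_mul_div, ← Finset.sum_div, dotProduct, Int.cast_sum,
      Int.cast_mul]
  rw [pairing, hsum]
  rcases h.dotProduct_self with hq | hq <;> rw [hq]
  · have : (2 * ((v ⬝ᵥ x : ℤ) / (1 : ℤ)) : ℝ) = (2 * (v ⬝ᵥ x) : ℤ) := by push_cast; ring
    rw [this, Int.floor_intCast, mul_one]
  · have : (2 * ((v ⬝ᵥ x : ℤ) / (2 : ℤ)) : ℝ) = (v ⬝ᵥ x : ℤ) := by push_cast; ring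
    rw [this, Int.floor_intCast, mul_comm]

theorem pairing_add_smul (x : ZLat d) (k : ℤ) :
    pairing e (x + k • v) = pairing e x + 2 * k := by
  apply mul_right_cancel₀ h.dotProduct_self_pos.ne'
  rw [h.pairing_mul_dotProduct_self, add_mul, h.pairing_mul_dotProduct_self, dotProduct_add,
    dotProduct_smul, smul_eq_mul]
  ring

/-- The lines of direction `e`, each enumerated in spiral order from rank `0`. -/
def lineEquiv : ZLat d ≃ Quotient ⟨sameLine e, h.equivalence_sameLine⟩ × ℕ :=
  Equiv.ofBijective (fun x ↦ (⟦x⟧, posIdx (pairing e x) - 1)) <| by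
    refine ⟨fun x y hxy ↦ ?_, fun ⟨i, n⟩ ↦ ?_⟩
    · obtain ⟨hline, hrank⟩ := Prod.ext_iff.1 hxy
      obtain ⟨k, rfl⟩ := h.sameLine_iff.1 (Quotient.exact hline)
      have hpos : posIdx (pairing e x + 2 * k) = posIdx (pairing e x) := by
        rw [← h.pairing_add_smul]
        exact (Nat.sub_one_cancel (posIdx_pos _) (posIdx_pos _) hrank).symm
      simp [eq_zero_of_posIdx_add_two_mul_eq hpos]
    · obtain ⟨x, rfl⟩ := Quotient.exists_rep i
      obtain ⟨k, hk⟩ := exists_posIdx_add_two_mul_eq (pairing e x) n.succ_pos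
      refine ⟨x + k • v, Prod.ext (Quotient.sound ?_) ?_⟩
      · exact h.equivalence_sameLine.symm (h.sameLine_iff.2 ⟨k, rfl⟩)
      · simp only [h.pairing_add_smul, hk, Nat.succ_sub_one]

theorem lineEquiv_fst_eq_iff : (h.lineEquiv y).1 = (h.lineEquiv x).1 ↔ sameLine e x y :=
  Quotient.eq.trans ⟨h.equivalence_sameLine.symm, h.equivalence_sameLine.symm⟩

theorem lineEquiv_snd_add_one (x : ZLat d) : (h.lineEquiv x).2 + 1 = posIdx (pairing e x) :=
  Nat.sub_add_cancel (posIdx_pos _)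

theorem exists_lineEquiv_symm_eq_add_smul {i} {m n : ℕ} (hmn : m < n) :
    ∃ k : ℤ, h.lineEquiv.symm (i, n) = h.lineEquiv.symm (i, m) + k • v ∧
      (0 < k ∧ 0 < pairing e (h.lineEquiv.symm (i, m)) + k ∨
        k < 0 ∧ pairing e (h.lineEquiv.symm (i, m)) + k ≤ 0) := by
  obtain ⟨k, hk⟩ : ∃ k : ℤ, h.lineEquiv.symm (i, n) = h.lineEquiv.symm (i, m) + k • v := by
    rw [← h.sameLine_iff, ← h.lineEquiv_fst_eq_iff]
    simp
  refine ⟨k, hk, pos_or_neg_of_posIdx_lt ?_⟩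
  rw [← h.pairing_add_smul, ← hk, ← h.lineEquiv_snd_add_one, ← h.lineEquiv_snd_add_one]
  simpa using hmn

theorem setOf_lt_stepR {u : ZLat d → NNReal} (hu : BddAbove (Set.range u)) (t : NNReal) :
    {x | t < stepR e u x} = compress h.lineEquiv {x | t < u x} := by
  ext x
  have hline : BddAbove (Set.range fun y : {y // sameLine e x y} ↦ u y) :=
    hu.mono (Set.range_comp_subset_range _ u)
  have hcard : {y : {y // sameLine e x y} | t < u y}.encard =
      {y | (h.lineEquiv y).1 = (h.lineEquiv x).1 ∧ t < u y}.encard := by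
    rw [← Subtype.val_injective.encard_image]
    congr 1
    ext y
    simp [lineEquiv_fst_eq_iff, and_comm]
  rw [Set.mem_ofPred_eq, stepR, lt_nthLargest_iff hline (posIdx_pos _).ne', hcard,
    ← h.lineEquiv_snd_add_one, Nat.cast_add_one, ENat.add_one_le_iff (ENat.natCast_ne_top _),
    compress, Set.mem_ofPred_eq, encard_lineRanks]
  rfl

theorem bddAbove_range_stepR {u : ZLat d → NNReal} (hu : BddAbove (Set.range u)) :
    BddAbove (Set.range (stepR e u)) := by
  obtain ⟨M, hM⟩ := hu
  refine ⟨M, Set.forall_mem_range.2 fun x ↦ not_lt.1 fun hx : x ∈ {x | M < stepR e u x} ↦ ?_⟩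
  have hempty : {x | M < u x} = ∅ :=
    Set.eq_empty_of_forall_notMem fun y ↦ (hM ⟨y, rfl⟩).not_gt
  rw [h.setOf_lt_stepR ⟨M, hM⟩, hempty, compress_empty] at hx
  exact hx

end IsLatticeDirection

end Direction

/-! ### Spiral order and distance -/

section Offset

variable {d : ℕ} {e : Fin d → ℝ} {v : ZLat d}

/-- `N²` times the squared distance from `x` to the point `a / N`. -/
def offsetSq (N : ℤ) (a x : ZLat d) : ℤ := (N • x - a) ⬝ᵥ (N • x - a)

theorem offsetSq_nonneg (N : ℤ) (a x : ZLat d) : 0 ≤ offsetSq N a x := by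
  rw [offsetSq, dotProduct]
  exact Finset.sum_nonneg fun _ _ ↦ mul_self_nonneg _

namespace IsLatticeDirection

variable (h : IsLatticeDirection e v)
include h

theorem offsetSq_add_smul (N : ℤ) (a x : ZLat d) (k : ℤ) : offsetSq N a (x + k • v) =
    offsetSq N a x + N * (k * (N * (v ⬝ᵥ v) * (pairing e x + k) - 2 * (a ⬝ᵥ v))) := by
  have hsmul : N • (x + k • v) - a = (N • x - a) + (N * k) • v := by
    rw [smul_add, mul_smul]; abel
  have hcross : (N • x - a) ⬝ᵥ v = N * (v ⬝ᵥ x) - a ⬝ᵥ v := by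
    rw [sub_dotProduct, smul_dotProduct, smul_eq_mul, dotProduct_comm x v]
  have hpair := h.pairing_mul_dotProduct_self x
  rw [offsetSq, offsetSq, hsmul, add_dotProduct, dotProduct_add, dotProduct_add, smul_dotProduct,
    smul_dotProduct, dotProduct_smul, dotProduct_comm v, hcross]
  simp only [dotProduct_smul, smul_eq_mul]
  linear_combination -N ^ 2 * k * hpair

/- Along a line with step `v`, the foot of the perpendicular from the origin is `-m / 2` steps away
from the point with doubled coordinate `m`. The foot of the perpendicular from `a / N` is shifted
forward by at most half a step, so that the nearest lattice points still come in spiral order. -/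
theorem monotone_offsetSq {N : ℤ} {a : ZLat d} (ha : 0 ≤ a ⬝ᵥ v)
    (ha' : 2 * (a ⬝ᵥ v) ≤ N * (v ⬝ᵥ v)) (i) :
    Monotone fun n ↦ offsetSq N a (h.lineEquiv.symm (i, n)) := by
  refine monotone_nat_of_le_succ fun n ↦ ?_
  obtain ⟨k, hk, hsign⟩ := h.exists_lineEquiv_symm_eq_add_smul (i := i) n.lt_succ_self
  have hNv : 0 ≤ N * (v ⬝ᵥ v) := by linarith
  rw [hk, h.offsetSq_add_smul, le_add_iff_nonneg_right]
  refine mul_nonneg (Int.nonneg_of_mul_nonneg_left hNv h.dotProduct_self_pos) ?_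
  rcases hsign with ⟨hk, hm⟩ | ⟨hk, hm⟩
  · exact mul_nonneg hk.le (by nlinarith)
  · exact mul_nonneg_of_nonpos_of_nonpos hk.le (by nlinarith)

theorem strictMono_offsetSq {N : ℤ} {a : ZLat d} (ha : 0 < a ⬝ᵥ v)
    (ha' : 2 * (a ⬝ᵥ v) < N * (v ⬝ᵥ v)) (i) :
    StrictMono fun n ↦ offsetSq N a (h.lineEquiv.symm (i, n)) := by
  refine strictMono_nat_of_lt_succ fun n ↦ ?_
  obtain ⟨k, hk, hsign⟩ := h.exists_lineEquiv_symm_eq_add_smul (i := i) n.lt_succ_self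
  have hNv : 0 < N * (v ⬝ᵥ v) := by linarith
  rw [hk, h.offsetSq_add_smul, lt_add_iff_pos_right]
  refine mul_pos (Int.pos_of_mul_pos_left hNv h.dotProduct_self_pos) ?_
  rcases hsign with ⟨hk, hm⟩ | ⟨hk, hm⟩
  · exact mul_pos hk (by nlinarith)
  · exact mul_pos_of_neg_of_neg hk (by nlinarith)

theorem monotone_eucNorm (i) : Monotone fun n ↦ eucNorm (h.lineEquiv.symm (i, n)) := by
  intro m n hmn
  have hsq := h.monotone_offsetSq (N := 1) (a := 0) (by simp)
    (by simpa using h.dotProduct_self_pos.le) i hmn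
  simp only [offsetSq, one_smul, sub_zero, dotProduct, ← pow_two] at hsq
  exact Real.toNNReal_le_toNNReal (Real.sqrt_le_sqrt (by exact_mod_cast hsq))

theorem strictMono_toNat_offsetSq_tilt (i) :
    StrictMono fun n ↦ (offsetSq (2 * d + 2) (tilt d) (h.lineEquiv.symm (i, n))).toNat := by
  intro m n hmn
  have hlt := h.strictMono_offsetSq (N := 2 * d + 2) h.tilt_pos (by linarith [h.tilt_lt]) i hmn
  exact (Int.toNat_lt_toNat ((offsetSq_nonneg _ _ _).trans_lt hlt)).2 hlt

end IsLatticeDirection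

end Offset

/-! ### The Schwarz rearrangement -/

section Schwarz

variable {d : ℕ} {u : ZLat d → NNReal}

theorem exists_isLatticeDirection_getD_evecList (hd : d ≠ 0) (k : ℕ) :
    ∃ v, IsLatticeDirection ((EvecList d).getD (k % (EvecList d).length) 0) v := by
  have hlen : 0 < (EvecList d).length := by
    simp only [EvecList, List.length_append, List.length_map, List.length_finRange]
    omega
  have hk := k.mod_lt hlen
  rw [List.getD_eq_getElem _ _ hk]
  exact exists_isLatticeDirection_of_mem_evecList (List.getElem_mem hk)

theorem contractsTo_setOf_lt_RZd (hd : d ≠ 0) (hu : Admissible u) {t : NNReal} (ht : 0 < t) :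
    ContractsTo eucNorm {x | t < u x} {x | t < RZd d u x} := by
  choose v h using exists_isLatticeDirection_getD_evecList hd
  have hbdd (k : ℕ) : BddAbove (Set.range (iterR d u k)) := by
    induction k with
    | zero => exact hu.bddAbove_range
    | succ k ih => exact (h k).bddAbove_range_stepR ih
  let W (x : ZLat d) : ℕ := (offsetSq (2 * d + 2) (tilt d) x).toNat
  have hW k i : StrictMono fun n ↦ W ((h k).lineEquiv.symm (i, n)) :=
    (h k).strictMono_toNat_offsetSq_tilt i
  have hiter k t : {x | t < iterR d u (k + 1) x} =
      compress (h k).lineEquiv {x | t < iterR d u k x} := (h k).setOf_lt_stepR (hbdd k) t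
  have hlim x : Tendsto (fun k ↦ iterR d u k x) atTop (𝓝 (RZd d u x)) :=
    tendsto_nhds_limUnder (exists_tendsto_of_setOf_lt_eq_compress hW hiter hu x)
  obtain ⟨k, hk⟩ := exists_setOf_lt_eq_compressIter_of_tendsto hW hiter hu hlim ht
  rw [hk]
  exact contractsTo_compressIter (fun k ↦ (h k).monotone_eucNorm) k

theorem eucNorm_single (i : Fin d) (n : ℕ) : eucNorm (Pi.single i (n : ℤ)) = n := by
  simp [eucNorm, Pi.single_apply, ite_pow]

theorem infinite_setOf_le_eucNorm (hd : d ≠ 0) (s : NNReal) :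
    {x : ZLat d | s ≤ eucNorm x}.Infinite := by
  obtain ⟨n, hn⟩ := exists_nat_ge s
  let i : Fin d := ⟨0, Nat.pos_of_ne_zero hd⟩
  refine Set.infinite_of_injective_forall_mem (f := fun m : ℕ ↦ Pi.single i ((n + m : ℕ) : ℤ))
    (fun m m' h ↦ by simpa using h) fun m ↦ ?_
  rw [Set.mem_ofPred_eq, eucNorm_single]
  exact hn.trans (by simp)

end Schwarz

theorem stmt17_general (d : ℕ) (hd : d ≠ 0) (u : ZLat d → NNReal) (hu : Admissible u)
    (F : NNReal → NNReal → NNReal)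
    (hF : ∀ s t s₀ t₀ : NNReal, F (s + s₀) (t + t₀) + F s t ≤ F (s + s₀) t + F s (t + t₀))
    (hF0 : ∀ s t, F s 0 ≤ F s t) :
    ∑' x : ZLat d, ((F (eucNorm x) (u x) : NNReal) : ENNReal) ≤
      ∑' x : ZLat d, ((F (eucNorm x) (RZd d u x) : NNReal) : ENNReal) :=
  tsum_le_tsum_of_contractsTo (isSubmodular_of_forall_add hF) hF0 hu
    fun _ ht ↦ contractsTo_setOf_lt_RZd hd hu ht

/-- If −F is supermodular, F(0,0) = 0 and Σ_x F(|x|,0) < ∞, then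
Σ F(|x|, u(x)) ≤ Σ F(|x|, u*(x)). -/
theorem stmt17 (d : ℕ) (hd : 2 ≤ d) (u : ZLat d → NNReal) (hu : Admissible u)
    (F : NNReal → NNReal → NNReal)
    (hF : ∀ s t s₀ t₀ : NNReal, F (s + s₀) (t + t₀) + F s t ≤ F (s + s₀) t + F s (t + t₀))
    (hF0 : F 0 0 = 0)
    (hfin : (∑' x : ZLat d, ((F (eucNorm x) 0 : NNReal) : ENNReal)) < ⊤) :
    ∑' x : ZLat d, ((F (eucNorm x) (u x) : NNReal) : ENNReal) ≤
      ∑' x : ZLat d, ((F (eucNorm x) (RZd d u x) : NNReal) : ENNReal) := by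
  have hd0 : d ≠ 0 := by omega
  exact stmt17_general d hd0 u hu F hF ((isSubmodular_of_forall_add hF).apply_zero_le_of_tsum_lt_top
    (infinite_setOf_le_eucNorm hd0) hfin)

end
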